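/- Let n ≥ 1 be an integer, γ ∈ (0, n/2), μ = n²/4 − γ², and let f : ℝⁿ → ℝ be bounded and continuous. Then the convolution u(x,y) = ∫_{ℝⁿ} y^{n/2+γ}(|x−ξ|² + y²)^{−(n/2+γ)} f(ξ) dξ is well defined and smooth on ℝⁿ × (0,∞) and satisfies the hyperbolic eigenvalue equation y²(Δ_x u(x,y) + ∂²_y u(x,y)) − (n−1) y ∂_y u(x,y) + μ u(x,y) = 0 on ℝⁿ × (0,∞). -/

import Mathlib

open Real Topology MeasureTheory

noncomputable def lapX {n : ℕ} (u : EuclideanSpace ℝ (Fin n) → ℝ → ℝ)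
    (x : EuclideanSpace ℝ (Fin n)) (y : ℝ) : ℝ :=
  ∑ i : Fin n, iteratedDeriv 2 (fun t : ℝ => u (x + t • EuclideanSpace.single i (1:ℝ)) y) 0

noncomputable def hypLap (n : ℕ) (u : EuclideanSpace ℝ (Fin n) → ℝ → ℝ)
    (x : EuclideanSpace ℝ (Fin n)) (y : ℝ) : ℝ :=
  y ^ 2 * (lapX u x y + iteratedDeriv 2 (u x) y) - ((n : ℝ) - 1) * y * deriv (u x) y

/-- The Poisson extension `u(x,y) = ∫ y^{n/2+γ}(|x-ξ|²+y²)^{-(n/2+γ)} f(ξ) dξ`. -/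
noncomputable def poissonExt (n : ℕ) (γ : ℝ) (f : EuclideanSpace ℝ (Fin n) → ℝ)
    (x : EuclideanSpace ℝ (Fin n)) (y : ℝ) : ℝ :=
  ∫ ξ : EuclideanSpace ℝ (Fin n),
    y ^ ((n : ℝ)/2 + γ) * (‖x - ξ‖ ^ 2 + y ^ 2) ^ (-((n : ℝ)/2 + γ)) * f ξ


namespace PoissonAux

open scoped ContDiff

abbrev E (n : ℕ) := EuclideanSpace ℝ (Fin n)

/-- Smooth away from zero, positively homogeneous of degree `-d`. -/
structure Hom {n : ℕ} {F : Type} [NormedAddCommGroup F] [NormedSpace ℝ F]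
    (d : ℝ) (G : E n × ℝ → F) : Prop where
  smooth : ContDiffOn ℝ ∞ G {0}ᶜ
  hom : ∀ c : ℝ, 0 < c → ∀ z : E n × ℝ, z ≠ 0 → G (c • z) = c ^ (-d) • G z

/-- The convolution with `G`. -/
noncomputable def J {n : ℕ} {F : Type} [NormedAddCommGroup F] [NormedSpace ℝ F]
    (f : E n → ℝ) (G : E n × ℝ → F) (p : E n × ℝ) : F :=
  ∫ ξ : E n, f ξ • G (p - (ξ, 0))

section
variable {n : ℕ} {F : Type} [NormedAddCommGroup F] [NormedSpace ℝ F]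
  {d : ℝ} {G : E n × ℝ → F}

lemma Hom.diffAt (h : Hom d G) {z : E n × ℝ} (hz : z ≠ 0) : DifferentiableAt ℝ G z :=
  (h.smooth.differentiableOn (by simp)).differentiableAt (isOpen_compl_singleton.mem_nhds hz)

lemma Hom.fderiv (h : Hom d G) : Hom (d + 1) (fderiv ℝ G) where
  smooth := h.smooth.fderiv_of_isOpen isOpen_compl_singleton (by simp)
  hom := by
    intro c hc z hz
    have h1 : (fun w => G (c • w)) =ᶠ[𝓝 z] (fun w => c ^ (-d) • G w) := by
      filter_upwards [isOpen_compl_singleton.mem_nhds hz] with w hw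
      exact h.hom c hc w hw
    have h2 := h1.fderiv_eq (𝕜 := ℝ)
    rw [fderiv_comp_smul, fderiv_fun_const_smul (h.diffAt hz)] at h2
    have h3 : (-(d + 1)) = -d - 1 := by ring
    rw [h3, Real.rpow_sub hc, Real.rpow_one, div_eq_inv_mul, mul_smul, ← h2, smul_smul,
      inv_mul_cancel₀ hc.ne', one_smul]

lemma Hom.apply {G : E n × ℝ → (E n × ℝ →L[ℝ] F)} (h : Hom d G) (e : E n × ℝ) :
    Hom d (fun z => G z e) where
  smooth := h.smooth.clm_apply contDiffOn_const
  hom := by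
    intro c hc z hz
    simp [h.hom c hc z hz]

lemma Hom.bound (h : Hom d G) : ∃ C : ℝ, 0 ≤ C ∧ ∀ z : E n × ℝ, z ≠ 0 →
    ‖G z‖ ≤ C * ‖z‖ ^ (-d) := by
  have hc : IsCompact (Metric.sphere (0 : E n × ℝ) 1) := isCompact_sphere _ _
  have hco : ContinuousOn G (Metric.sphere (0 : E n × ℝ) 1) :=
    h.smooth.continuousOn.mono (by
      intro z hz h0
      simp at hz h0
      simp [h0] at hz)
  obtain ⟨C, hC⟩ := hc.exists_bound_of_continuousOn hco
  refine ⟨max C 0, le_max_right _ _, fun z hz => ?_⟩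
  have hz' : 0 < ‖z‖ := norm_pos_iff.2 hz
  have hu : ‖(‖z‖⁻¹ • z)‖ = 1 := by
    rw [norm_smul, norm_inv, norm_norm, inv_mul_cancel₀ hz'.ne']
  have h1 := h.hom ‖z‖ hz' (‖z‖⁻¹ • z) (by rw [← norm_pos_iff, hu]; exact one_pos)
  rw [smul_smul, mul_inv_cancel₀ hz'.ne', one_smul] at h1
  rw [h1, norm_smul, Real.norm_of_nonneg (by positivity), mul_comm]
  gcongr
  exact (hC _ (by simp [hu])).trans (le_max_left _ _)

lemma ne_zero_of {p : E n × ℝ} (hp : 0 < p.2) (ξ : E n) : p - (ξ, 0) ≠ 0 := by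
  intro h
  have := congrArg Prod.snd h
  simp at this
  exact hp.ne' this

lemma Hom.meas (h : Hom d G) {f : E n → ℝ} (hf : Continuous f) {p : E n × ℝ} (hp : 0 < p.2) :
    AEStronglyMeasurable (fun ξ : E n => f ξ • G (p - (ξ, 0))) volume := by
  apply Continuous.aestronglyMeasurable
  apply hf.smul
  exact h.smooth.continuousOn.comp_continuous (by fun_prop) (fun ξ => ne_zero_of hp ξ)

lemma Hom.dom (h : Hom d G) (hd : (n : ℝ) < d) {f : E n → ℝ} {C : ℝ} (hC : ∀ x, |f x| ≤ C)
    {p : E n × ℝ} (hp : 0 < p.2) :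
    ∃ b : E n → ℝ, Integrable b ∧ ∀ ξ, ∀ q ∈ Metric.ball p (p.2 / 2),
      ‖f ξ • G (q - (ξ, 0))‖ ≤ b ξ := by
  obtain ⟨M, hM, hb⟩ := h.bound
  have hd0 : 0 ≤ d := le_trans (Nat.cast_nonneg n) hd.le
  have hC0 : 0 ≤ C := (abs_nonneg _).trans (hC 0)
  set a := p.2 / 2 with ha
  have ha0 : 0 < a := by positivity
  set R := ‖p.1‖ + a with hR
  set k := 1 + (1 + R) / a with hk
  have hk0 : 0 < k := by positivity
  refine ⟨fun ξ => C * M * k ^ d * (1 + ‖ξ‖) ^ (-d), ?_, ?_⟩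
  · apply Integrable.const_mul
    apply integrable_one_add_norm
    simpa using hd
  · intro ξ q hq
    have hq1 : ‖q - p‖ < a := by simpa [dist_eq_norm] using hq
    have hqa : ‖q.1 - p.1‖ < a := (norm_fst_le (q - p)).trans_lt hq1
    have hqb : ‖q.2 - p.2‖ < a := (norm_snd_le (q - p)).trans_lt hq1
    rw [Real.norm_eq_abs, abs_lt] at hqb
    have hq2 : a < q.2 := by linarith [hqb.1]
    set m := ‖q - (ξ, 0)‖ with hm
    have hm1 : a ≤ m := by
      have := norm_snd_le (q - (ξ, 0))
      simp only [Prod.snd_sub, sub_zero, Real.norm_eq_abs] at this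
      exact hq2.le.trans ((le_abs_self _).trans this)
    have hm2 : ‖ξ‖ ≤ m + R := by
      have h1 := norm_fst_le (q - (ξ, 0))
      simp only [Prod.fst_sub] at h1
      have h2 : ‖ξ‖ ≤ ‖q.1 - ξ‖ + ‖q.1 - p.1‖ + ‖p.1‖ := by
        have : ξ = -(q.1 - ξ) + (q.1 - p.1) + p.1 := by abel
        calc ‖ξ‖ = ‖-(q.1 - ξ) + (q.1 - p.1) + p.1‖ := by rw [← this]
          _ ≤ _ := by
            refine (norm_add₃_le).trans ?_
            rw [norm_neg]
      linarith
    have hm0 : 0 < m := ha0.trans_le hm1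
    have hkm : 1 + ‖ξ‖ ≤ k * m := by
      have : (1 + R) ≤ (1 + R) / a * m := by
        rw [div_mul_eq_mul_div, le_div_iff₀ ha0]
        gcongr
      have h2 : k * m = m + (1 + R) / a * m := by rw [hk]; ring
      linarith
    have hpow : m ^ (-d) ≤ k ^ d * (1 + ‖ξ‖) ^ (-d) := by
      have h1 : (k * m) ^ (-d) ≤ (1 + ‖ξ‖) ^ (-d) :=
        Real.rpow_le_rpow_of_nonpos (by positivity) hkm (by linarith)
      rw [Real.mul_rpow hk0.le hm0.le] at h1
      calc m ^ (-d) = k ^ d * (k ^ (-d) * m ^ (-d)) := by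
            rw [← mul_assoc, ← Real.rpow_add hk0]; simp
        _ ≤ _ := by gcongr
    have hq0 : 0 < q.2 := ha0.trans hq2
    rw [norm_smul, Real.norm_eq_abs]
    calc |f ξ| * ‖G (q - (ξ, 0))‖ ≤ C * (M * m ^ (-d)) := by
          gcongr
          · exact hC ξ
          · exact hb _ (ne_zero_of hq0 ξ)
      _ ≤ C * (M * (k ^ d * (1 + ‖ξ‖) ^ (-d))) := by gcongr
      _ = _ := by ring

lemma Hom.integrable (h : Hom d G) (hd : (n : ℝ) < d) {f : E n → ℝ} (hf : Continuous f)
    {C : ℝ} (hC : ∀ x, |f x| ≤ C) {p : E n × ℝ} (hp : 0 < p.2) :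
    Integrable (fun ξ : E n => f ξ • G (p - (ξ, 0))) := by
  obtain ⟨b, hb, hb'⟩ := h.dom hd hC hp
  exact hb.mono' (h.meas hf hp) (ae_of_all _ fun ξ =>
    hb' ξ p (Metric.mem_ball_self (by positivity)))

lemma Hom.hasFDerivAt (h : Hom d G) (hd : (n : ℝ) < d) {f : E n → ℝ} (hf : Continuous f)
    {C : ℝ} (hC : ∀ x, |f x| ≤ C) {p : E n × ℝ} (hp : 0 < p.2) :
    HasFDerivAt (J f G) (J f (_root_.fderiv ℝ G) p) p := by
  obtain ⟨b, hb, hb'⟩ := h.fderiv.dom (by linarith) hC hp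
  have hpos : ∀ q ∈ Metric.ball p (p.2 / 2), 0 < q.2 := by
    intro q hq
    have hq1 : ‖q - p‖ < p.2 / 2 := by simpa [dist_eq_norm] using hq
    have hqb : ‖q.2 - p.2‖ < p.2 / 2 := (norm_snd_le (q - p)).trans_lt hq1
    rw [Real.norm_eq_abs, abs_lt] at hqb
    linarith [hqb.1]
  have hnb : Metric.ball p (p.2 / 2) ∈ 𝓝 p := Metric.ball_mem_nhds _ (by positivity)
  refine hasFDerivAt_integral_of_dominated_of_fderiv_le (bound := b) hnb ?_
    (h.integrable hd hf hC hp) (h.fderiv.meas hf hp) (ae_of_all _ hb') hb (ae_of_all _ ?_)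
  · filter_upwards [hnb] with q hq
    exact h.meas hf (hpos q hq)
  · intro ξ q hq
    have h1 := (h.diffAt (ne_zero_of (hpos q hq) ξ)).hasFDerivAt
    have h2 : HasFDerivAt (fun q : E n × ℝ => q - (ξ, (0:ℝ))) (ContinuousLinearMap.id ℝ _) q :=
      (hasFDerivAt_id q).sub_const _
    have h3 := (h1.comp q h2).const_smul (f ξ)
    rw [ContinuousLinearMap.comp_id] at h3
    exact h3

end

lemma isOpen_H {n : ℕ} : IsOpen {p : E n × ℝ | 0 < p.2} :=
  isOpen_lt continuous_const continuous_snd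

lemma contDiffOn_J {n : ℕ} {f : E n → ℝ} (hf : Continuous f)
    {C : ℝ} (hC : ∀ x, |f x| ≤ C) (k : ℕ) :
    ∀ {F : Type} [NormedAddCommGroup F] [NormedSpace ℝ F] {d : ℝ} {G : E n × ℝ → F},
    Hom d G → (n : ℝ) < d → ContDiffOn ℝ k (J f G) {p : E n × ℝ | 0 < p.2} := by
  induction k with
  | zero =>
    intro F _ _ d G h hd
    have h0 : ContinuousOn (J f G) {p : E n × ℝ | 0 < p.2} :=
      fun p hp => (h.hasFDerivAt hd hf hC hp).continuousAt.continuousWithinAt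
    simpa using h0
  | succ k ih =>
    intro F _ _ d G h hd
    push_cast
    rw [contDiffOn_succ_iff_fderiv_of_isOpen isOpen_H]
    refine ⟨fun p hp => (h.hasFDerivAt hd hf hC hp).differentiableAt.differentiableWithinAt,
      by simp, ?_⟩
    exact (ih h.fderiv (by linarith)).congr (fun p hp => (h.hasFDerivAt hd hf hC hp).fderiv)

section line
variable {n : ℕ} {d : ℝ} {G : E n × ℝ → ℝ} {f : E n → ℝ} {C : ℝ}

lemma J_line (h : Hom d G) (hd : (n : ℝ) < d) (hf : Continuous f) (hC : ∀ x, |f x| ≤ C)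
    {c : ℝ → E n × ℝ} {e : E n × ℝ} {t : ℝ} (hc : HasDerivAt c e t) (ht : 0 < (c t).2) :
    HasDerivAt (fun t => J f G (c t)) (J f (fun z => fderiv ℝ G z e) (c t)) t := by
  have h1 := (h.hasFDerivAt hd hf hC ht).comp_hasDerivAt t hc
  have h2 : J f (fun z => fderiv ℝ G z e) (c t) = (J f (fderiv ℝ G) (c t)) e := by
    unfold J
    rw [ContinuousLinearMap.integral_apply (h.fderiv.integrable (by linarith) hf hC ht)]
    simp
  rw [h2]
  exact h1

lemma J_line2 (h : Hom d G) (hd : (n : ℝ) < d) (hf : Continuous f) (hC : ∀ x, |f x| ≤ C)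
    {c : ℝ → E n × ℝ} {e : E n × ℝ} {t : ℝ} (hc : ∀ t, HasDerivAt c e t) (ht : 0 < (c t).2) :
    iteratedDeriv 2 (fun t => J f G (c t)) t
      = J f (fun z => fderiv ℝ (fun w => fderiv ℝ G w e) z e) (c t) := by
  rw [iteratedDeriv_succ, iteratedDeriv_one]
  have hcc : Continuous c := continuous_iff_continuousAt.2 fun t => (hc t).continuousAt
  have hev : deriv (fun t => J f G (c t)) =ᶠ[𝓝 t] fun t => J f (fun z => fderiv ℝ G z e) (c t) := by
    filter_upwards [(isOpen_H.preimage hcc).mem_nhds ht] with r hr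
    exact (J_line h hd hf hC (hc r) hr).deriv
  rw [hev.deriv_eq]
  exact (J_line (h.fderiv.apply e) (by linarith) hf hC (hc t) ht).deriv

end line

/-- squared Euclidean norm -/
noncomputable def N {n : ℕ} (z : E n × ℝ) : ℝ := ‖z.1‖ ^ 2 + z.2 ^ 2
noncomputable def B {n : ℕ} (z e : E n × ℝ) : ℝ := inner ℝ z.1 e.1 + z.2 * e.2
noncomputable def K {n : ℕ} (s : ℝ) (z : E n × ℝ) : ℝ := N z ^ (-s)

lemma N_pos {n : ℕ} {z : E n × ℝ} (hz : z ≠ 0) : 0 < N z := by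
  unfold N
  by_cases h : z.1 = 0
  · have : z.2 ≠ 0 := fun h2 => hz (Prod.ext h h2)
    positivity
  · have : 0 < ‖z.1‖ := norm_pos_iff.2 h
    positivity

lemma N_line {n : ℕ} (z e : E n × ℝ) (t : ℝ) : N (z + t • e) = N z + 2 * t * B z e + t ^ 2 * N e := by
  simp only [N, B, Prod.fst_add, Prod.snd_add, Prod.smul_fst, Prod.smul_snd, norm_add_sq_real,
    norm_smul, inner_smul_right, mul_pow, Real.norm_eq_abs, sq_abs, smul_eq_mul]
  ring

lemma B_line {n : ℕ} (z e : E n × ℝ) (t : ℝ) : B (z + t • e) e = B z e + t * N e := by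
  simp only [N, B, Prod.fst_add, Prod.snd_add, Prod.smul_fst, Prod.smul_snd, inner_add_left,
    inner_smul_left, real_inner_self_eq_norm_sq, smul_eq_mul]
  simp
  ring

lemma hom_K {n : ℕ} (s : ℝ) : Hom (n := n) (2 * s) (K s) where
  smooth := by
    unfold K N
    apply ContDiffOn.rpow_const_of_ne
    · apply ContDiff.contDiffOn
      exact (contDiff_fst.norm_sq ℝ).add (contDiff_snd.pow 2)
    · intro z hz
      exact (N_pos hz).ne'
  hom := by
    intro c hc z hz
    have : N (c • z) = c ^ (2:ℝ) * N z := by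
      simp [N, norm_smul, mul_pow]
      ring
    unfold K
    rw [this, Real.mul_rpow (by positivity) (N_pos hz).le, ← Real.rpow_mul hc.le, smul_eq_mul]
    congr 2
    ring

lemma N_hasDeriv {n : ℕ} (s : ℝ) {z : E n × ℝ} (hz : z ≠ 0) (e : E n × ℝ) :
    HasDerivAt (fun t : ℝ => N (z + t • e) ^ (-s)) (-2 * s * B z e * N z ^ (-s - 1)) 0 := by
  simp_rw [N_line]
  have h1 : HasDerivAt (fun t : ℝ => N z + 2 * t * B z e + t ^ 2 * N e) (2 * B z e) 0 := by
    have := (((((hasDerivAt_id (0:ℝ)).const_mul 2).mul_const (B z e)).const_add (N z)).add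
      (((hasDerivAt_id (0:ℝ)).pow 2).mul_const (N e)))
    refine this.congr_deriv ?_
    simp
  have h2 := h1.rpow_const (p := -s) (Or.inl (by simpa using (N_pos hz).ne'))
  refine h2.congr_deriv ?_
  rw [show N z + 2 * 0 * B z e + 0 ^ 2 * N e = N z by ring]
  ring

lemma fderiv_K {n : ℕ} (s : ℝ) {z : E n × ℝ} (hz : z ≠ 0) (e : E n × ℝ) :
    fderiv ℝ (K s) z e = -2 * s * B z e * N z ^ (-s - 1) := by
  rw [← ((hom_K s).diffAt hz).lineDeriv_eq_fderiv]
  exact (N_hasDeriv s hz e).deriv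

lemma fderiv2_K {n : ℕ} (s : ℝ) {z : E n × ℝ} (hz : z ≠ 0) (e : E n × ℝ) :
    fderiv ℝ (fun w => fderiv ℝ (K s) w e) z e
      = -2 * s * N e * N z ^ (-s - 1) + 4 * s * (s + 1) * B z e ^ 2 * N z ^ (-s - 2) := by
  rw [← (((hom_K s).fderiv.apply e).diffAt hz).lineDeriv_eq_fderiv]
  unfold lineDeriv
  have hev : (fun t : ℝ => fderiv ℝ (K s) (z + t • e) e) =ᶠ[𝓝 0]
      fun t : ℝ => (-2 * s * (B z e + t * N e)) * N (z + t • e) ^ (-(s + 1)) := by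
    have hcont : Continuous fun t : ℝ => z + t • e := by fun_prop
    have h0 : (fun t : ℝ => z + t • e) 0 ∈ ({0}ᶜ : Set (E n × ℝ)) := by simpa using hz
    filter_upwards [hcont.continuousAt.preimage_mem_nhds (isOpen_compl_singleton.mem_nhds h0)]
      with t ht
    rw [fderiv_K s ht, B_line]
    congr 2
    ring
  rw [hev.deriv_eq]
  have h1 : HasDerivAt (fun t : ℝ => -2 * s * (B z e + t * N e)) (-2 * s * N e) 0 := by
    simpa using (((hasDerivAt_id (0:ℝ)).mul_const (N e)).const_add (B z e)).const_mul (-2 * s)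
  rw [(h1.fun_mul (N_hasDeriv (s + 1) hz e)).deriv]
  have e1 : -(s + 1) = -s - 1 := by ring
  have e2 : -(s + 1) - 1 = -s - 2 := by ring
  simp only [zero_smul, add_zero, zero_mul, e1]
  have e3 : -s - 1 - 1 = -s - 2 := by ring
  rw [e3]
  ring

/-- the kernel identity -/
lemma kernel_id {n : ℕ} (s : ℝ) {z : E n × ℝ} (hz : z ≠ 0) :
    z.2 * ((∑ i : Fin n, fderiv ℝ (fun w => fderiv ℝ (K s) w (EuclideanSpace.single i (1:ℝ), 0)) z
        (EuclideanSpace.single i (1:ℝ), 0))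
      + fderiv ℝ (fun w => fderiv ℝ (K s) w (0, 1)) z (0, 1))
      + (2 * s - n + 1) * fderiv ℝ (K s) z (0, 1) = 0 := by
  simp_rw [fderiv2_K s hz, fderiv_K s hz]
  have h1 : ∀ i : Fin n, N ((EuclideanSpace.single i (1:ℝ), 0) : E n × ℝ) = 1 := by
    intro i; simp [N]
  have h2 : N ((0, 1) : E n × ℝ) = 1 := by simp [N]
  have h3 : ∀ i : Fin n, B z ((EuclideanSpace.single i (1:ℝ), 0) : E n × ℝ) = z.1 i := by
    intro i; simp [B, EuclideanSpace.inner_single_right]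
  have h4 : B z ((0, 1) : E n × ℝ) = z.2 := by simp [B]
  simp_rw [h1, h2, h3, h4]
  have h5 : N z ^ (-s - 1) = N z * N z ^ (-s - 2) := by
    rw [show -s - 1 = 1 + (-s - 2) by ring, Real.rpow_add (N_pos hz), Real.rpow_one]
  have h6 : N z = (∑ i : Fin n, z.1 i ^ 2) + z.2 ^ 2 := by
    simp [N, EuclideanSpace.norm_sq_eq]
  rw [Finset.sum_add_distrib, Finset.sum_const, ← Finset.sum_mul, ← Finset.mul_sum]
  have h7 : (∑ i : Fin n, z.1 i ^ 2) = N z - z.2 ^ 2 := by rw [h6]; ring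
  rw [h7, h5]
  simp
  ring

lemma J_pde {n : ℕ} {s : ℝ} (hs : (n : ℝ) < 2 * s) {f : E n → ℝ} (hf : Continuous f)
    {C : ℝ} (hC : ∀ x, |f x| ≤ C) {p : E n × ℝ} (hp : 0 < p.2) :
    p.2 * ((∑ i : Fin n, J f (fun z => fderiv ℝ
        (fun w => fderiv ℝ (K s) w (EuclideanSpace.single i (1:ℝ), 0)) z
        (EuclideanSpace.single i (1:ℝ), 0)) p)
      + J f (fun z => fderiv ℝ (fun w => fderiv ℝ (K s) w (0, 1)) z (0, 1)) p)
      + (2 * s - n + 1) * J f (fun z => fderiv ℝ (K s) z (0, 1)) p = 0 := by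
  have hI2 : ∀ e : E n × ℝ, Integrable (fun ξ : E n =>
      f ξ • (fun z => fderiv ℝ (fun w => fderiv ℝ (K s) w e) z e) (p - (ξ, 0))) := fun e =>
    (((hom_K s).fderiv.apply e).fderiv.apply e).integrable (by linarith) hf hC hp
  have hI1 : ∀ e : E n × ℝ, Integrable (fun ξ : E n =>
      f ξ • (fun z => fderiv ℝ (K s) z e) (p - (ξ, 0))) := fun e =>
    ((hom_K s).fderiv.apply e).integrable (by linarith) hf hC hp
  unfold J
  rw [← integral_finsetSum _ (fun i _ => hI2 _),
    ← integral_add (integrable_finsetSum _ (fun i _ => hI2 _)) (hI2 _),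
    ← integral_const_mul, ← integral_const_mul,
    ← integral_add (Integrable.const_mul (Integrable.fun_add
      (integrable_finsetSum _ (fun i _ => hI2 _)) (hI2 _)) _) ((hI1 _).const_mul _)]
  refine integral_eq_zero_of_ae (ae_of_all _ fun ξ => ?_)
  have h := kernel_id s (ne_zero_of hp ξ)
  have h2 : (p - (ξ, 0)).2 = p.2 := by simp
  rw [h2] at h
  simp only [smul_eq_mul, ← Finset.mul_sum, Pi.zero_apply]
  linear_combination f ξ * h

lemma poissonExt_eq {n : ℕ} (γ : ℝ) (f : E n → ℝ) (x : E n) (y : ℝ) :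
    poissonExt n γ f x y = y ^ ((n : ℝ)/2 + γ) * J f (K ((n : ℝ)/2 + γ)) (x, y) := by
  unfold poissonExt J
  rw [← integral_const_mul]
  congr 1
  ext ξ
  simp [K, N]
  ring

end PoissonAux

/-- for bounded continuous `f` the Poisson convolution is well defined,
smooth on the upper half-space, and satisfies `Δ_{g⁺} u + μ u = 0`, `μ = n²/4 - γ²`. -/
theorem poisson_extension_eigenfunction
    (n : ℕ) (hn : 1 ≤ n) (γ : ℝ) (hγ : γ ∈ Set.Ioo (0:ℝ) ((n : ℝ)/2))
    (μ : ℝ) (hμ : μ = (n : ℝ)^2/4 - γ^2)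
    (f : EuclideanSpace ℝ (Fin n) → ℝ) (hfc : Continuous f)
    (hfb : ∃ C : ℝ, ∀ x, |f x| ≤ C) :
    (∀ x : EuclideanSpace ℝ (Fin n), ∀ y : ℝ, 0 < y →
      Integrable (fun ξ : EuclideanSpace ℝ (Fin n) =>
        y ^ ((n : ℝ)/2 + γ) * (‖x - ξ‖ ^ 2 + y ^ 2) ^ (-((n : ℝ)/2 + γ)) * f ξ)) ∧
    ContDiffOn ℝ (⊤ : ℕ∞) (fun p : EuclideanSpace ℝ (Fin n) × ℝ => poissonExt n γ f p.1 p.2)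
      {p : EuclideanSpace ℝ (Fin n) × ℝ | 0 < p.2} ∧
    ∀ x : EuclideanSpace ℝ (Fin n), ∀ y : ℝ, 0 < y →
      hypLap n (poissonExt n γ f) x y + μ * poissonExt n γ f x y = 0 := by
  obtain ⟨C, hC⟩ := hfb
  obtain ⟨hγ0, hγ1⟩ := hγ
  set s := (n : ℝ)/2 + γ with hs
  have hs2 : (n : ℝ) < 2 * s := by rw [hs]; linarith
  have hK := PoissonAux.hom_K (n := n) s
  have hu : ∀ x y, poissonExt n γ f x y = y ^ s * PoissonAux.J f (PoissonAux.K s) (x, y) :=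
    PoissonAux.poissonExt_eq γ f
  refine ⟨?_, ?_, ?_⟩
  · intro x y hy
    have h := (hK.integrable hs2 hfc hC (p := (x, y)) hy).const_mul (y ^ s)
    refine h.congr (Filter.Eventually.of_forall fun ξ => ?_)
    simp [PoissonAux.K, PoissonAux.N]
    ring
  · simp_rw [hu]
    apply ContDiffOn.mul
    · exact contDiffOn_snd.rpow_const_of_ne (fun p hp => (ne_of_gt hp))
    · exact contDiffOn_infty.2 fun k => PoissonAux.contDiffOn_J hfc hC k hK hs2
  · intro x y hy
    have hpde := PoissonAux.J_pde hs2 hfc hC (p := (x, y)) hy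
    unfold hypLap lapX
    have hX : ∀ i : Fin n, iteratedDeriv 2 (fun t : ℝ =>
        poissonExt n γ f (x + t • EuclideanSpace.single i (1:ℝ)) y) 0
        = y ^ s * PoissonAux.J f (fun z => fderiv ℝ
          (fun w => fderiv ℝ (PoissonAux.K s) w (EuclideanSpace.single i (1:ℝ), 0)) z
          (EuclideanSpace.single i (1:ℝ), 0)) (x, y) := by
      intro i
      simp_rw [hu]
      have hc : ∀ t : ℝ, HasDerivAt (fun t : ℝ => (x + t • EuclideanSpace.single i (1:ℝ), y))
          (EuclideanSpace.single i (1:ℝ), 0) t := by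
        intro t
        refine HasDerivAt.prodMk ?_ (hasDerivAt_const t y)
        simpa using ((hasDerivAt_id t).smul_const (EuclideanSpace.single i (1:ℝ))).const_add x
      have h2 := PoissonAux.J_line2 hK hs2 hfc hC (t := 0) hc hy
      rw [iteratedDeriv_const_mul_field, h2]
      simp
    have hc : ∀ t : ℝ, HasDerivAt (fun t : ℝ => (x, t)) ((0 : EuclideanSpace ℝ (Fin n)), (1:ℝ)) t :=
      fun t => (hasDerivAt_const t x).prodMk (hasDerivAt_id t)
    have hV : ∀ t : ℝ, 0 < t → HasDerivAt (fun t => PoissonAux.J f (PoissonAux.K s) (x, t))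
        (PoissonAux.J f (fun z => fderiv ℝ (PoissonAux.K s) z (0, 1)) (x, t)) t :=
      fun t ht => PoissonAux.J_line hK hs2 hfc hC (hc t) ht
    have hV2 : HasDerivAt
        (fun t => PoissonAux.J f (fun z => fderiv ℝ (PoissonAux.K s) z (0, 1)) (x, t))
        (PoissonAux.J f (fun z => fderiv ℝ (fun w => fderiv ℝ (PoissonAux.K s) w (0, 1)) z (0, 1))
          (x, y)) y :=
      PoissonAux.J_line (hK.fderiv.apply (0, 1)) (by linarith) hfc hC (hc y) hy
    have hP : ∀ r t : ℝ, 0 < t → HasDerivAt (fun t : ℝ => t ^ r) (r * t ^ (r - 1)) t :=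
      fun r t ht => Real.hasDerivAt_rpow_const (Or.inl ht.ne')
    have hY1 : ∀ t : ℝ, 0 < t → deriv (poissonExt n γ f x) t
        = s * t ^ (s - 1) * PoissonAux.J f (PoissonAux.K s) (x, t)
          + t ^ s * PoissonAux.J f (fun z => fderiv ℝ (PoissonAux.K s) z (0, 1)) (x, t) := by
      intro t ht
      have : poissonExt n γ f x = fun t => t ^ s * PoissonAux.J f (PoissonAux.K s) (x, t) :=
        funext (hu x)
      rw [this]
      exact ((hP s t ht).fun_mul (hV t ht)).deriv
    have hev : deriv (poissonExt n γ f x) =ᶠ[𝓝 y] fun t =>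
        s * t ^ (s - 1) * PoissonAux.J f (PoissonAux.K s) (x, t)
          + t ^ s * PoissonAux.J f (fun z => fderiv ℝ (PoissonAux.K s) z (0, 1)) (x, t) := by
      filter_upwards [lt_mem_nhds hy] with t ht
      exact hY1 t ht
    have hY2 := (((((hP (s - 1) y hy).const_mul s).fun_mul (hV y hy)).fun_add
      ((hP s y hy).fun_mul hV2))).deriv
    rw [iteratedDeriv_succ, iteratedDeriv_one, hev.deriv_eq, hY2, hY1 y hy, hu]
    simp_rw [hX]
    rw [← Finset.mul_sum]
    have e1 : y ^ s = y ^ 2 * y ^ (s - 1 - 1) := by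
      rw [← Real.rpow_natCast, ← Real.rpow_add hy]
      congr 1
      push_cast
      ring
    have e2 : y ^ (s - 1) = y * y ^ (s - 1 - 1) := by
      conv_rhs => rw [← Real.rpow_one y, ← Real.rpow_mul hy.le, ← Real.rpow_add hy]
      congr 1
      ring
    have hμ' : μ = n * s - s ^ 2 := by rw [hμ, hs]; ring
    rw [e2, e1, hμ']
    simp only at hpde
    linear_combination y ^ 3 * y ^ (s - 1 - 1) * hpde
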